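/- arXiv:1110.1823 — 3 statements merged into one kernel-verified Lean document; each statement's English description precedes it below -/
import Mathlib

section
/- Let Ω be a bounded domain (bounded, connected, open set) in ℂ and let φ be the restriction to Ω of a continuous function on the closure of Ω. Then the Hankel operator H^Ω_φ is a compact operator from A²(Ω) to L²(Ω). -/
open MeasureTheory Metric
noncomputable section

abbrev L2C (V : Set ℂ) := Lp ℂ 2 (volume.restrict V)

/-- The Bergman space of an open set `V ⊆ ℂ`: square-integrable functions on `V`
that agree a.e. with a holomorphic function on `V`. -/
def A2C (V : Set ℂ) : Submodule ℂ (L2C V) where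
  carrier := {f | ∃ g : ℂ → ℂ, DifferentiableOn ℂ g V ∧
    ∀ᵐ z ∂(volume.restrict V), f z = g z}
  zero_mem' := ⟨0, differentiableOn_const 0, by
    filter_upwards [Lp.coeFn_zero ℂ 2 (volume.restrict _)] with z h
    simpa using h⟩
  add_mem' := by
    rintro f f' ⟨g, hg, hfg⟩ ⟨g', hg', hfg'⟩
    refine ⟨g + g', hg.add hg', ?_⟩
    filter_upwards [Lp.coeFn_add f f', hfg, hfg'] with z h1 h2 h3
    rw [h1]; simp [h2, h3]
  smul_mem' := by
    rintro c f ⟨g, hg, hfg⟩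
    refine ⟨c • g, hg.const_smul c, ?_⟩
    filter_upwards [Lp.coeFn_smul c f, hfg] with z h1 h2
    rw [h1]; simp [h2]

/-- `H` is the Hankel operator with symbol `φ` on the Bergman space of `V`:
for every `f` in the Bergman space, `H f` is orthogonal to the Bergman space and
`φ·f - H f` agrees a.e. with a holomorphic function, i.e. `φ·f - H f = P^V(φ·f)`. -/
def IsHankelC (V : Set ℂ) (φ : ℂ → ℂ) (H : A2C V →L[ℂ] L2C V) : Prop :=
  (∀ f : A2C V, ∀ g ∈ A2C V, @inner ℂ _ _ (H f) g = 0) ∧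
  (∀ f : A2C V, ∃ g : ℂ → ℂ, DifferentiableOn ℂ g V ∧
    ∀ᵐ z ∂(volume.restrict V), φ z * (f : L2C V) z - (H f) z = g z)

open scoped ENNReal

theorem schur_pt {α : Type*} [MeasurableSpace α] (μ : Measure α) (k f : α → ℝ≥0∞)
    (hk : AEMeasurable k μ) (hf : AEMeasurable f μ) :
    (∫⁻ w, k w * f w ∂μ) ^ 2 ≤ (∫⁻ w, k w ∂μ) * ∫⁻ w, k w * f w ^ 2 ∂μ := by
  have h := ENNReal.lintegral_mul_le_Lp_mul_Lq μ Real.HolderConjugate.two_two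
    (f := fun w => k w ^ (1/2 : ℝ)) (g := fun w => k w ^ (1/2 : ℝ) * f w)
    (hk.pow_const _) ((hk.pow_const _).mul hf)
  have e1 : ∀ x : ℝ≥0∞, x ^ (1/2 : ℝ) * x ^ (1/2:ℝ) = x := fun x => by
    rw [← ENNReal.rpow_add_of_nonneg _ _ (by norm_num) (by norm_num)]; norm_num
  have e2 : ∀ x : ℝ≥0∞, (x ^ (1/2 : ℝ)) ^ (2:ℝ) = x := fun x => by
    rw [← ENNReal.rpow_mul]; norm_num
  have l : ∫⁻ a, ((fun w => k w ^ (1/2 : ℝ)) * (fun w => k w ^ (1/2 : ℝ) * f w)) a ∂μ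
      = ∫⁻ w, k w * f w ∂μ := by
    congr 1; ext w; simp only [Pi.mul_apply]; rw [← mul_assoc, e1]
  rw [l] at h
  simp only [e2, ENNReal.mul_rpow_of_nonneg _ _ (show (0:ℝ) ≤ 2 by norm_num)] at h
  calc _ ≤ _ := pow_le_pow_left' h 2
    _ = _ := by
      rw [mul_pow]
      simp only [← ENNReal.rpow_natCast, Nat.cast_ofNat, e2]

theorem schur_l {α : Type*} [MeasurableSpace α] (μ : Measure α) [SFinite μ] (k : α → α → ℝ≥0∞)
    (f : α → ℝ≥0∞) (C : ℝ≥0∞)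
    (hk : Measurable (Function.uncurry k)) (hf : Measurable f)
    (h1 : ∀ᵐ z ∂μ, ∫⁻ w, k z w ∂μ ≤ C) (h2 : ∀ᵐ w ∂μ, ∫⁻ z, k z w ∂μ ≤ C) :
    ∫⁻ z, (∫⁻ w, k z w * f w ∂μ) ^ 2 ∂μ ≤ C ^ 2 * ∫⁻ w, f w ^ 2 ∂μ := by
  have hk2 : Measurable (Function.uncurry fun z w => k z w * f w ^ 2) :=
    hk.mul ((hf.comp measurable_snd).pow_const 2)
  calc ∫⁻ z, (∫⁻ w, k z w * f w ∂μ) ^ 2 ∂μ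
      ≤ ∫⁻ z, C * ∫⁻ w, k z w * f w ^ 2 ∂μ ∂μ := by
        apply lintegral_mono_ae
        filter_upwards [h1] with z hz
        refine (schur_pt μ (k z) f (hk.comp measurable_prodMk_left).aemeasurable
          hf.aemeasurable).trans ?_
        gcongr
    _ = C * ∫⁻ z, ∫⁻ w, k z w * f w ^ 2 ∂μ ∂μ :=
        lintegral_const_mul _ hk2.lintegral_prod_right
    _ = C * ∫⁻ w, ∫⁻ z, k z w * f w ^ 2 ∂μ ∂μ := by
        rw [lintegral_lintegral_swap hk2.aemeasurable]
    _ = C * ∫⁻ w, (∫⁻ z, k z w ∂μ) * f w ^ 2 ∂μ := by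
        congr 2; ext w
        exact lintegral_mul_const _ (hk.comp measurable_prodMk_right)
    _ ≤ C * ∫⁻ w, C * f w ^ 2 ∂μ := by
        gcongr 1
        apply lintegral_mono_ae
        filter_upwards [h2] with w hw
        gcongr
    _ = _ := by
        rw [lintegral_const_mul _ (hf.pow_const 2), sq C, mul_assoc]

theorem schur_fun {α : Type*} [MeasurableSpace α] (μ : Measure α) [SFinite μ] (k : α → α → ℂ)
    (f : α → ℂ) (C : NNReal)
    (hk : Measurable (Function.uncurry k)) (hf : MemLp f 2 μ)
    (h1 : ∀ᵐ z ∂μ, ∫⁻ w, ‖k z w‖ₑ ∂μ ≤ C) (h2 : ∀ᵐ w ∂μ, ∫⁻ z, ‖k z w‖ₑ ∂μ ≤ C) :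
    (∀ᵐ z ∂μ, Integrable (fun w => k z w * f w) μ) ∧
    MemLp (fun z => ∫ w, k z w * f w ∂μ) 2 μ ∧
    eLpNorm (fun z => ∫ w, k z w * f w ∂μ) 2 μ ≤ C * eLpNorm f 2 μ := by
  have key : ∫⁻ z, (∫⁻ w, ‖k z w‖ₑ * ‖f w‖ₑ ∂μ) ^ 2 ∂μ ≤ C ^ 2 * ∫⁻ w, ‖f w‖ₑ ^ 2 ∂μ := by
    have ⟨g, hg, hfg⟩ := hf.1
    have e1 : ∀ z, ∫⁻ w, ‖k z w‖ₑ * ‖f w‖ₑ ∂μ = ∫⁻ w, ‖k z w‖ₑ * ‖g w‖ₑ ∂μ := fun z =>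
      lintegral_congr_ae (by filter_upwards [hfg] with w hw; rw [hw])
    have e2 : ∫⁻ w, ‖f w‖ₑ ^ 2 ∂μ = ∫⁻ w, ‖g w‖ₑ ^ 2 ∂μ :=
      lintegral_congr_ae (by filter_upwards [hfg] with w hw; rw [hw])
    simp only [e1, e2]
    exact schur_l μ (fun z w => ‖k z w‖ₑ) (fun w => ‖g w‖ₑ) C hk.enorm hg.measurable.enorm h1 h2
  have sq : ∀ u : α → ℂ, eLpNorm u 2 μ ^ 2 = ∫⁻ w, ‖u w‖ₑ ^ 2 ∂μ := fun u => by
    have := eLpNorm_nnreal_pow_eq_lintegral (f := u) (μ := μ) (p := 2) (by norm_num)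
    simpa using this
  have fin : ∫⁻ w, ‖f w‖ₑ ^ 2 ∂μ < ∞ := by
    rw [← sq]; exact ENNReal.pow_lt_top hf.2
  have jm : AEStronglyMeasurable (Function.uncurry fun z w => k z w * f w) (μ.prod μ) :=
    hk.aestronglyMeasurable.mul hf.1.comp_snd
  have int : ∀ᵐ z ∂μ, Integrable (fun w => k z w * f w) μ := by
    have fl : ∀ᵐ z ∂μ, (∫⁻ w, ‖k z w‖ₑ * ‖f w‖ₑ ∂μ) ^ 2 < ∞ := by
      apply ae_lt_top'
      · have : AEMeasurable (Function.uncurry fun z w => ‖k z w‖ₑ * ‖f w‖ₑ) (μ.prod μ) := by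
          simpa [Function.uncurry_def, enorm_mul] using jm.enorm
        exact this.lintegral_prod_right'.pow_const 2
      · exact (key.trans_lt (ENNReal.mul_lt_top (by simp) fin)).ne
    filter_upwards [fl] with z hz
    refine ⟨(hk.comp measurable_prodMk_left).aestronglyMeasurable.mul hf.1, ?_⟩
    rw [hasFiniteIntegral_iff_enorm]
    simp only [enorm_mul]
    by_contra hh
    simp at hh
    simp [hh] at hz
  have bd : eLpNorm (fun z => ∫ w, k z w * f w ∂μ) 2 μ ≤ C * eLpNorm f 2 μ := by
    rw [← ENNReal.pow_le_pow_left_iff (two_ne_zero), mul_pow, sq, sq]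
    refine le_trans (lintegral_mono fun z => ?_) key
    gcongr
    refine (enorm_integral_le_lintegral_enorm _).trans ?_
    simp [enorm_mul]
  exact ⟨int, ⟨jm.integral_prod_right', bd.trans_lt (ENNReal.mul_lt_top (by simp) hf.2)⟩, bd⟩

theorem schur_op {α : Type*} [MeasurableSpace α] (μ : Measure α) [SFinite μ] (k : α → α → ℂ)
    (C : NNReal) (hk : Measurable (Function.uncurry k))
    (h1 : ∀ᵐ z ∂μ, ∫⁻ w, ‖k z w‖ₑ ∂μ ≤ C) (h2 : ∀ᵐ w ∂μ, ∫⁻ z, ‖k z w‖ₑ ∂μ ≤ C) :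
    ∃ T : Lp ℂ 2 μ →L[ℂ] Lp ℂ 2 μ, ‖T‖ ≤ C ∧ ∀ f : Lp ℂ 2 μ,
      (∀ᵐ z ∂μ, Integrable (fun w => k z w * f w) μ) ∧
      ∀ᵐ z ∂μ, T f z = ∫ w, k z w * f w ∂μ := by
  have S := fun f : Lp ℂ 2 μ => schur_fun μ k f C hk (Lp.memLp f) h1 h2
  let T0 : Lp ℂ 2 μ →ₗ[ℂ] Lp ℂ 2 μ :=
    { toFun := fun f => (S f).2.1.toLp _
      map_add' := fun f g => by
        apply Lp.ext
        filter_upwards [(S (f+g)).2.1.coeFn_toLp, (S f).2.1.coeFn_toLp, (S g).2.1.coeFn_toLp,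
          Lp.coeFn_add ((S f).2.1.toLp _) ((S g).2.1.toLp _), (S f).1, (S g).1] with z a b c d e e'
        rw [a, d, Pi.add_apply, b, c, ← integral_add e e']
        apply integral_congr_ae
        filter_upwards [Lp.coeFn_add f g] with w hw
        rw [hw]; simp [mul_add]
      map_smul' := fun c f => by
        apply Lp.ext
        filter_upwards [(S (c • f)).2.1.coeFn_toLp, (S f).2.1.coeFn_toLp,
          Lp.coeFn_smul c ((S f).2.1.toLp _)] with z a b d
        rw [RingHom.id_apply, a, d, Pi.smul_apply, b, ← integral_smul]
        apply integral_congr_ae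
        filter_upwards [Lp.coeFn_smul c f] with w hw
        rw [hw]; simp [mul_left_comm] }
  refine ⟨T0.mkContinuous C fun f => ?_, LinearMap.mkContinuous_norm_le _ C.2 _, fun f =>
    ⟨(S f).1, (S f).2.1.coeFn_toLp⟩⟩
  change ‖(S f).2.1.toLp _‖ ≤ _
  rw [Lp.norm_toLp, Lp.norm_def]
  have := ENNReal.toReal_mono (ENNReal.mul_ne_top (by simp) (Lp.memLp f).2.ne) (S f).2.2
  simpa using this

theorem exists_simple (Ω : Set ℂ) (hb : Bornology.IsBounded Ω) (δ : ℝ) (hδ : 0 < δ) :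
    ∃ s : SimpleFunc ℂ ℂ, ∀ w ∈ Ω, dist (s w) w < δ := by
  have hK : IsCompact (closure Ω) := hb.isCompact_closure
  have hcov : closure Ω ⊆ ⋃ n : ℕ, ball (TopologicalSpace.denseSeq ℂ n) δ := by
    intro x _
    obtain ⟨n, hn⟩ := (TopologicalSpace.denseRange_denseSeq ℂ).exists_dist_lt x hδ
    exact Set.mem_iUnion.2 ⟨n, by simpa using hn⟩
  obtain ⟨t, ht⟩ := hK.elim_finite_subcover _ (fun n => isOpen_ball) hcov
  refine ⟨SimpleFunc.nearestPt (TopologicalSpace.denseSeq ℂ) (t.sup id), fun w hw => ?_⟩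
  have := ht (subset_closure hw)
  simp only [Set.mem_iUnion, exists_prop] at this
  obtain ⟨n, hn, hwn⟩ := this
  have h := SimpleFunc.edist_nearestPt_le (TopologicalSpace.denseSeq ℂ) w
    (Finset.le_sup (f := id) hn)
  simp only [edist_dist, id] at h
  rw [ENNReal.ofReal_le_ofReal_iff dist_nonneg] at h
  refine h.trans_lt ?_
  rw [dist_comm]; exact hwn

theorem finite_rank (μ : Measure ℂ) [IsFiniteMeasure μ] (g : ℂ → ℂ) (hg : Continuous g)
    (hgc : HasCompactSupport g) (s : SimpleFunc ℂ ℂ) (T : Lp ℂ 2 μ →L[ℂ] Lp ℂ 2 μ)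
    (hT : ∀ f : Lp ℂ 2 μ, ∀ᵐ z ∂μ, T f z = ∫ w, g (z - s w) * f w ∂μ) :
    IsCompactOperator T := by
  obtain ⟨B, hB⟩ := hgc.exists_bound_of_continuous hg
  have hv : ∀ c : ℂ, MemLp (fun z => g (z - c)) 2 μ := fun c =>
    MemLp.of_bound (by fun_prop) B (Filter.Eventually.of_forall fun z => hB _)
  let S : Lp ℂ 2 μ →L[ℂ] Lp ℂ 2 μ := ∑ c ∈ s.range,
    (ContinuousLinearMap.toSpanSingleton ℂ ((hv c).toLp _)).comp
      (innerSL ℂ (indicatorConstLp 2 (s.measurableSet_fiber c) (measure_ne_top μ _) (1:ℂ)))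
  have hS : IsCompactOperator S := by
    have : ∀ t : Finset ℂ, IsCompactOperator (∑ c ∈ t,
      (ContinuousLinearMap.toSpanSingleton ℂ ((hv c).toLp _)).comp
      (innerSL ℂ (indicatorConstLp 2 (s.measurableSet_fiber c) (measure_ne_top μ _) (1:ℂ)))
        : Lp ℂ 2 μ →L[ℂ] Lp ℂ 2 μ) := by
      intro t
      induction t using Finset.induction_on with
      | empty => simpa using isCompactOperator_zero
      | insert a t ha ih =>
        rw [Finset.sum_insert ha]
        refine IsCompactOperator.add ?_ ih
        exact (isCompactOperator_of_locallyCompactSpace_dom (innerSL ℂ (indicatorConstLp 2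
          (s.measurableSet_fiber a) (measure_ne_top μ _) (1:ℂ)))).clm_comp
            (ContinuousLinearMap.toSpanSingleton ℂ ((hv a).toLp _))
    exact this _
  have : T = S := by
    ext1 f
    apply Lp.ext
    have hf : Integrable f μ := (Lp.memLp f).integrable one_le_two
    have e : S f = ∑ c ∈ s.range, (∫ w in s ⁻¹' {c}, f w ∂μ) • (hv c).toLp _ := by
      simp only [S, _root_.sum_apply, ContinuousLinearMap.comp_apply,
        ContinuousLinearMap.toSpanSingleton_apply]
      refine Finset.sum_congr rfl fun c _ => ?_
      rw [innerSL_apply_apply, L2.inner_indicatorConstLp_one]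
    have e1 : ∀ t : Finset ℂ, ∀ᵐ z ∂μ, (∑ c ∈ t, (∫ w in s ⁻¹' {c}, f w ∂μ) • (hv c).toLp _ : Lp ℂ 2 μ) z
        = ∑ c ∈ t, (∫ w in s ⁻¹' {c}, f w ∂μ) * g (z - c) := by
      intro t
      induction t using Finset.induction_on with
      | empty =>
        filter_upwards [Lp.coeFn_zero ℂ 2 μ] with z hz
        simpa using hz
      | insert a t ha ih =>
        simp only [Finset.sum_insert ha]
        filter_upwards [ih, Lp.coeFn_add ((∫ w in s ⁻¹' {a}, f w ∂μ) • (hv a).toLp _)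
          (∑ c ∈ t, (∫ w in s ⁻¹' {c}, f w ∂μ) • (hv c).toLp _),
          Lp.coeFn_smul (∫ w in s ⁻¹' {a}, f w ∂μ) ((hv a).toLp _), (hv a).coeFn_toLp] with z h1 h2 h3 h4
        rw [h2, Pi.add_apply, h1, h3, Pi.smul_apply, h4, smul_eq_mul]
    rw [e]
    filter_upwards [hT f, e1 s.range] with z h1 h2
    rw [h1, h2]
    have : ∀ w, g (z - s w) * f w = ∑ c ∈ s.range, (s ⁻¹' {c}).indicator (fun w => g (z - c) * f w) w := by
      intro w
      rw [Finset.sum_eq_single (s w)]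
      · simp
      · intro c _ hc
        simp [Ne.symm hc]
      · intro h; simp at h
    simp only [this]
    rw [integral_finsetSum]
    · refine Finset.sum_congr rfl fun c _ => ?_
      rw [integral_indicator (s.measurableSet_fiber c), integral_const_mul, mul_comm]
    · intro c _
      exact (hf.const_mul _).indicator (s.measurableSet_fiber c)
  rw [this]; exact hS

theorem conv_op (Ω : Set ℂ) (ho : IsOpen Ω) (hb : Bornology.IsBounded Ω) (k : ℂ → ℂ)
    (hkm : Measurable k) (hki : Integrable k) :
    ∃ T : Lp ℂ 2 (volume.restrict Ω) →L[ℂ] Lp ℂ 2 (volume.restrict Ω), IsCompactOperator T ∧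
      ∀ f : Lp ℂ 2 (volume.restrict Ω), ∀ᵐ z ∂(volume.restrict Ω),
        T f z = ∫ w in Ω, k (z - w) * f w := by
  have hfin : IsFiniteMeasure (volume.restrict Ω) := ⟨by simpa using hb.measure_lt_top⟩
  set μ := volume.restrict Ω with hμ
  have row : ∀ (u : ℂ → ℂ) (z : ℂ), ∫⁻ w, ‖u (z - w)‖ₑ ∂μ ≤ ∫⁻ w, ‖u w‖ₑ := fun u z =>
    (lintegral_mono' Measure.restrict_le_self le_rfl).trans
      (lintegral_sub_left_eq_self (fun w => ‖u w‖ₑ) z).le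
  have col : ∀ (u : ℂ → ℂ) (w : ℂ), ∫⁻ z, ‖u (z - w)‖ₑ ∂μ ≤ ∫⁻ w, ‖u w‖ₑ := fun u w =>
    (lintegral_mono' Measure.restrict_le_self le_rfl).trans
      (lintegral_sub_right_eq_self (fun w => ‖u w‖ₑ) w).le
  have hCk : ∫⁻ w, ‖k w‖ₑ = ((∫⁻ w, ‖k w‖ₑ).toNNReal : ℝ≥0∞) :=
    (ENNReal.coe_toNNReal hki.2.ne).symm
  obtain ⟨T, -, hT⟩ := schur_op μ (fun z w => k (z - w)) (∫⁻ w, ‖k w‖ₑ).toNNReal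
    (hkm.comp (measurable_fst.sub measurable_snd))
    (Filter.Eventually.of_forall fun z => (row k z).trans hCk.le)
    (Filter.Eventually.of_forall fun z => (col k z).trans hCk.le)
  refine ⟨T, ?_, fun f => (hT f).2⟩
  have hcl := isClosed_setOfPred_isCompactOperator (σ₁₂ := RingHom.id ℂ) (M₁ := Lp ℂ 2 μ)
    (M₂ := Lp ℂ 2 μ)
  change T ∈ {f : Lp ℂ 2 μ →L[ℂ] Lp ℂ 2 μ | IsCompactOperator f}
  rw [← hcl.closure_eq, Metric.mem_closure_iff]
  intro ε hε
  obtain ⟨g, hgc, hkg, hgcont, hgi⟩ := hki.exists_hasCompactSupport_integral_sub_le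
    (show 0 < ε / 4 by positivity)
  have hV : 0 ≤ μ.real Set.univ := measureReal_nonneg
  set ε' := ε / (4 * (μ.real Set.univ + 1)) with hε'
  have hε'0 : 0 < ε' := by positivity
  obtain ⟨δ, hδ, hgu⟩ := Metric.uniformContinuous_iff.1
    (hgc.uniformContinuous_of_continuous hgcont) ε' hε'0
  obtain ⟨s, hs⟩ := exists_simple Ω hb δ hδ
  have hmg : Measurable (Function.uncurry fun z w => g (z - s w)) :=
    hgcont.measurable.comp (measurable_fst.sub (s.measurable.comp measurable_snd))
  obtain ⟨B, hB⟩ := hgc.exists_bound_of_continuous hgcont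
  have hB' : ∀ z w, ‖g (z - s w)‖ₑ ≤ ENNReal.ofReal B := fun z w => by
    rw [← ofReal_norm]; exact ENNReal.ofReal_le_ofReal (hB _)
  have hCB : ENNReal.ofReal B * μ Set.univ
      = ((ENNReal.ofReal B * μ Set.univ).toNNReal : ℝ≥0∞) :=
    (ENNReal.coe_toNNReal (ENNReal.mul_ne_top (by simp) (measure_ne_top _ _))).symm
  obtain ⟨T', -, hT'⟩ := schur_op μ (fun z w => g (z - s w))
    (ENNReal.ofReal B * μ Set.univ).toNNReal hmg
    (Filter.Eventually.of_forall fun z => by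
      rw [← hCB, ← lintegral_const]; exact lintegral_mono fun w => hB' z w)
    (Filter.Eventually.of_forall fun w => by
      rw [← hCB, ← lintegral_const]; exact lintegral_mono fun z => hB' z w)
  have hcomp : IsCompactOperator T' := finite_rank μ g hgcont hgc s T' fun f => (hT' f).2
  refine ⟨T', hcomp, ?_⟩
  have hL1 : ∫⁻ w, ‖(k - g) w‖ₑ ≤ ENNReal.ofReal (ε / 4) := by
    have := ofReal_integral_norm_eq_lintegral_enorm (hki.sub hgi)
    simp only [Pi.sub_apply] at this ⊢
    rw [← this]
    exact ENNReal.ofReal_le_ofReal hkg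
  have hgs : ∀ z, ∀ w ∈ Ω, ‖g (z - w) - g (z - s w)‖ₑ ≤ ENNReal.ofReal ε' := fun z w hw => by
    rw [← ofReal_norm, ← dist_eq_norm]
    exact ENNReal.ofReal_le_ofReal (hgu (by rw [dist_sub_left, dist_comm]; exact hs w hw)).le
  have htot : ENNReal.ofReal (ε / 4) + ENNReal.ofReal ε' * μ Set.univ
      ≤ (((ε / 2).toNNReal : NNReal) : ℝ≥0∞) := by
    rw [← ENNReal.ofReal_toReal (measure_ne_top μ Set.univ), ← ENNReal.ofReal_mul hε'0.le,
      ← ENNReal.ofReal_add (by positivity) (by positivity)]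
    apply ENNReal.ofReal_le_ofReal
    have : ε' * μ.real Set.univ ≤ ε / 4 := by
      rw [hε', div_mul_eq_mul_div, div_le_div_iff₀ (by positivity) (by positivity)]
      nlinarith
    change _ + ε' * μ.real Set.univ ≤ _
    linarith
  have htri : ∀ z, ∀ w ∈ Ω, ‖k (z - w) - g (z - s w)‖ₑ ≤
      ‖(k - g) (z - w)‖ₑ + ENNReal.ofReal ε' := fun z w hw => by
    have : k (z - w) - g (z - s w) = (k - g) (z - w) + (g (z - w) - g (z - s w)) := by simp
    rw [this]
    exact (enorm_add_le _ _).trans (by gcongr; exact hgs z w hw)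
  obtain ⟨D, hD, hDf⟩ := schur_op μ (fun z w => k (z - w) - g (z - s w)) (ε / 2).toNNReal
    ((hkm.comp (measurable_fst.sub measurable_snd)).sub hmg)
    (Filter.Eventually.of_forall fun z => by
      refine le_trans ?_ htot
      calc ∫⁻ w, ‖k (z - w) - g (z - s w)‖ₑ ∂μ
          ≤ ∫⁻ w, (‖(k - g) (z - w)‖ₑ + ENNReal.ofReal ε') ∂μ := by
            apply lintegral_mono_ae
            filter_upwards [ae_restrict_mem ho.measurableSet] with w hw
            exact htri z w hw
        _ = ∫⁻ w, ‖(k - g) (z - w)‖ₑ ∂μ + ENNReal.ofReal ε' * μ Set.univ := by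
            rw [lintegral_add_right _ measurable_const, lintegral_const]
        _ ≤ _ := by gcongr; exact (row _ _).trans hL1)
    (by
      filter_upwards [ae_restrict_mem ho.measurableSet] with w hw
      refine le_trans ?_ htot
      calc ∫⁻ z, ‖k (z - w) - g (z - s w)‖ₑ ∂μ
          ≤ ∫⁻ z, (‖(k - g) (z - w)‖ₑ + ENNReal.ofReal ε') ∂μ := by
            exact lintegral_mono fun z => htri z w hw
        _ = ∫⁻ z, ‖(k - g) (z - w)‖ₑ ∂μ + ENNReal.ofReal ε' * μ Set.univ := by
            rw [lintegral_add_right _ measurable_const, lintegral_const]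
        _ ≤ _ := by gcongr; exact (col _ _).trans hL1)
  have : T - T' = D := by
    ext1 f
    apply Lp.ext
    filter_upwards [(hT f).1, (hT f).2, (hT' f).1, (hT' f).2, (hDf f).2,
      Lp.coeFn_sub (T f) (T' f)] with z a b c d e h
    rw [_root_.sub_apply, h, Pi.sub_apply, b, d, e, ← integral_sub a c]
    simp only [sub_mul]
  rw [dist_eq_norm, this]
  refine hD.trans_lt ?_
  rw [Real.coe_toNNReal _ (by positivity)]
  linarith

theorem polar_ball (h : ℂ → ℂ) (a : ℂ) (r : ℝ) (hi : IntegrableOn h (ball a r)) :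
    ∫ w in ball a r, h w = ∫ ρ in Set.Ioo 0 r, ((ρ * (2 * Real.pi) : ℝ) : ℂ) * Real.circleAverage h a ρ := by
  set F : ℂ → ℂ := fun u => (ball a r).indicator h (u + a) with hF
  have hFi : Integrable F := by
    exact ((integrable_indicator_iff isOpen_ball.measurableSet).2 hi).comp_add_right a
  have e1 : ∫ w in ball a r, h w = ∫ u, F u := by
    rw [hF, integral_add_right_eq_self (fun u => (ball a r).indicator h u),
      integral_indicator isOpen_ball.measurableSet]
  have hint : IntegrableOn (fun p : ℝ × ℝ => p.1 • F (Complex.polarCoord.symm p)) polarCoord.target := by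
    have hG : Integrable (fun p : ℝ × ℝ => F (Complex.measurableEquivRealProd.symm p)) :=
      (Complex.volume_preserving_equiv_real_prod.symm).integrable_comp_of_integrable hFi
    have h3 := (integrableOn_image_iff_integrableOn_abs_det_fderiv_smul (volume : Measure (ℝ × ℝ))
      polarCoord.open_target.measurableSet
      (fun p _ => (hasFDerivAt_polarCoord_symm p).hasFDerivWithinAt) polarCoord.symm.injOn
      (fun p : ℝ × ℝ => F (Complex.measurableEquivRealProd.symm p))).1 hG.integrableOn
    refine h3.congr_fun (fun p hp => ?_) polarCoord.open_target.measurableSet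
    have hp1 : 0 < p.1 := hp.1
    simp only [det_fderivPolarCoordSymm, abs_of_pos hp1,
      Complex.measurableEquivRealProd_symm_polarCoord_symm_apply]
  have key : ∀ ρ : ℝ, 0 < ρ → ∫ θ in Set.Ioo (-Real.pi) Real.pi, ρ • F (Complex.polarCoord.symm (ρ, θ))
      = (Set.Ioo 0 r).indicator
        (fun ρ => ((ρ * (2 * Real.pi) : ℝ) : ℂ) * Real.circleAverage h a ρ) ρ := by
    intro ρ hρ
    have hmap : ∀ θ : ℝ, Complex.polarCoord.symm (ρ, θ) + a = circleMap a ρ θ := fun θ => by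
      rw [Complex.polarCoord_symm_apply, circleMap, Complex.exp_mul_I]
      push_cast; ring
    have hmem : ∀ θ : ℝ, circleMap a ρ θ ∈ ball a r ↔ ρ < r := fun θ => by
      simp [circleMap, abs_of_pos hρ]
    by_cases hr : ρ < r
    · rw [Set.indicator_of_mem (show ρ ∈ Set.Ioo 0 r from ⟨hρ, hr⟩)]
      have : ∀ θ : ℝ, F (Complex.polarCoord.symm (ρ, θ)) = h (circleMap a ρ θ) := fun θ => by
        simp only [hF, hmap]
        rw [Set.indicator_of_mem ((hmem θ).2 hr)]
      simp only [this]
      rw [integral_smul, ← integral_Ioc_eq_integral_Ioo,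
        ← intervalIntegral.integral_of_le (by linarith [Real.pi_pos])]
      have hp : Function.Periodic (fun θ => h (circleMap a ρ θ)) (2 * Real.pi) :=
        (periodic_circleMap a ρ).comp h
      have h2 := hp.intervalIntegral_add_eq (-Real.pi) 0
      rw [show -Real.pi + 2 * Real.pi = Real.pi by ring, zero_add] at h2
      rw [h2, Real.circleAverage_def, Complex.real_smul, Complex.real_smul]
      have := Real.pi_ne_zero
      push_cast
      field_simp
    · rw [Set.indicator_of_notMem (fun hh => hr hh.2)]
      have : ∀ θ : ℝ, F (Complex.polarCoord.symm (ρ, θ)) = 0 := fun θ => by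
        simp only [hF, hmap]
        rw [Set.indicator_of_notMem (fun hh => hr ((hmem θ).1 hh))]
      simp only [this, smul_zero, integral_zero]
  rw [e1, ← Complex.integral_comp_polarCoord_symm]
  rw [polarCoord_target] at hint ⊢
  rw [Measure.volume_eq_prod, setIntegral_prod _ hint,
    setIntegral_congr_fun measurableSet_Ioi (fun ρ hρ => key ρ hρ),
    setIntegral_indicator measurableSet_Ioo]
  congr 2
  ext x; simp

theorem inv_integrableOn (r : ℝ) : IntegrableOn (fun w : ℂ => w⁻¹) (ball 0 r) := by
  rw [← integrable_indicator_iff isOpen_ball.measurableSet]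
  have h := (integrable_fun_norm_addHaar (volume : Measure ℂ)
    (f := (Set.Iio r).indicator (fun y : ℝ => y⁻¹))).2 ?_
  · refine h.mono (Measurable.aestronglyMeasurable ?_) (Filter.Eventually.of_forall fun w => ?_)
    · exact measurable_inv.indicator isOpen_ball.measurableSet
    · by_cases hw : ‖w‖ < r
      · simp [Set.indicator, hw]
      · simp [Set.indicator, hw]
  · refine Integrable.mono' (g := (Set.Ioo 0 r).indicator (fun _ => (1:ℝ))) ?_ ?_ ?_
    · refine Integrable.restrict ?_
      rw [integrable_indicator_iff measurableSet_Ioo]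
      simp
    · refine Measurable.aestronglyMeasurable ?_
      exact (measurable_id.pow_const _).smul (measurable_inv.indicator measurableSet_Iio)
    · filter_upwards [ae_restrict_mem measurableSet_Ioi] with y hy
      have hy' : (0:ℝ) < y := hy
      by_cases hw : y < r
      · simp [Set.indicator, hw, hy', hy'.ne', Complex.finrank_real_complex]
      · simp [Set.indicator, hw]

theorem inv_sub_integrableOn (z : ℂ) (S : Set ℂ) (hS : Bornology.IsBounded S) :
    IntegrableOn (fun w : ℂ => (z - w)⁻¹) S := by
  obtain ⟨R, hR⟩ := hS.subset_ball z
  refine IntegrableOn.mono_set ?_ hR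
  have h := ((integrable_indicator_iff isOpen_ball.measurableSet).2
    (inv_integrableOn R)).comp_sub_left z
  refine (h.integrableOn (s := ball z R)).congr_fun (fun w hw => ?_) isOpen_ball.measurableSet
  have : z - w ∈ ball (0:ℂ) R := by
    rw [mem_ball, dist_zero_right, ← dist_eq_norm, dist_comm]; exact hw
  simp only [Set.indicator_of_mem this]

theorem integral_rho (r : ℝ) (hr : 0 ≤ r) (c : ℂ) :
    ∫ ρ in Set.Ioo 0 r, ((ρ * (2 * Real.pi) : ℝ) : ℂ) * c = Real.pi * r ^ 2 * c := by
  rw [integral_mul_const, integral_complex_ofReal, ← integral_Ioc_eq_integral_Ioo,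
    ← intervalIntegral.integral_of_le hr, intervalIntegral.integral_mul_const, integral_id]
  push_cast; ring

theorem mean_ball (g : ℂ → ℂ) (U : Set ℂ) (hg : DifferentiableOn ℂ g U) (a : ℂ)
    (r : ℝ) (hr : 0 ≤ r) (hU : closedBall a r ⊆ U) :
    ∫ w in ball a r, g w = Real.pi * r ^ 2 * g a := by
  have hi : IntegrableOn g (ball a r) :=
    ((hg.mono hU).continuousOn.integrableOn_compact (isCompact_closedBall a r)).mono_set
      ball_subset_closedBall
  rw [polar_ball g a r hi, ← integral_rho r hr]
  refine setIntegral_congr_fun measurableSet_Ioo fun ρ hρ => ?_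
  have hd : DiffContOnCl ℂ g (ball a |ρ|) := by
    rw [abs_of_pos hρ.1]
    exact ((hg.mono hU).mono (closedBall_subset_closedBall hρ.2.le)).diffContOnCl_ball subset_rfl
  simp only [hd.circleAverage]

theorem circleAverage_inv_in (z a : ℂ) (ρ : ℝ) (h0 : 0 < ρ) (h : ρ < dist z a) :
    Real.circleAverage (fun w => (z - w)⁻¹) a ρ = (z - a)⁻¹ := by
  have hd : DiffContOnCl ℂ (fun w => (z - w)⁻¹) (ball a |ρ|) := by
    rw [abs_of_pos h0]
    refine DifferentiableOn.diffContOnCl_ball (U := closedBall a ρ) (fun w hw => ?_) subset_rfl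
    have : z - w ≠ 0 := by
      intro hh
      rw [sub_eq_zero] at hh
      subst hh
      exact absurd (mem_closedBall.1 hw) (not_le.2 h)
    exact (DifferentiableAt.inv (by fun_prop) this).differentiableWithinAt
  rw [hd.circleAverage]

theorem circleAverage_inv_out (z a : ℂ) (ρ : ℝ) (h0 : 0 < ρ) (h : dist z a < ρ) :
    Real.circleAverage (fun w => (z - w)⁻¹) a ρ = 0 := by
  have hd : DiffContOnCl ℂ (fun w => -(w - a) / (ρ ^ 2 - (starRingEnd ℂ) (z - a) * (w - a))) (ball a |ρ|) := by
    rw [abs_of_pos h0]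
    refine DifferentiableOn.diffContOnCl_ball (U := closedBall a ρ) (fun w hw => ?_) subset_rfl
    have : (ρ : ℂ) ^ 2 - (starRingEnd ℂ) (z - a) * (w - a) ≠ 0 := by
      intro hh
      rw [sub_eq_zero] at hh
      have h1 := congrArg norm hh
      rw [norm_mul, RCLike.norm_conj, ← dist_eq_norm, ← dist_eq_norm] at h1
      simp only [norm_pow, Complex.norm_real, Real.norm_eq_abs, sq_abs] at h1
      have h2 := mem_closedBall.1 hw
      nlinarith [dist_nonneg (x := z) (y := a), dist_nonneg (x := w) (y := a)]
    have d1 : DifferentiableAt ℂ (fun w => -(w - a)) w := by fun_prop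
    have d2 : DifferentiableAt ℂ (fun w => (ρ : ℂ) ^ 2 - (starRingEnd ℂ) (z - a) * (w - a)) w := by
      fun_prop
    exact (d1.fun_div d2 this).differentiableWithinAt
  have h1 := hd.circleAverage
  simp only [sub_self, neg_zero, zero_div] at h1
  have h2 := (Complex.conjCLE : ℂ →L[ℝ] ℂ).circleAverage_comp_comm (c := a) (R := ρ)
    (f := fun w => -(w - a) / (ρ ^ 2 - (starRingEnd ℂ) (z - a) * (w - a)))
    (by
      have := hd.continuousOn
      rw [abs_of_pos h0, closure_ball a h0.ne'] at this
      exact (this.mono sphere_subset_closedBall).circleIntegrable h0.le)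
  rw [h1] at h2
  simp only [map_zero] at h2
  rw [← h2]
  apply Real.circleAverage_congr_sphere
  intro w hw
  rw [abs_of_pos h0, mem_sphere, dist_eq_norm] at hw
  have hne : w - a ≠ 0 := by
    intro hh; rw [hh, norm_zero] at hw; exact h0.ne hw
  have hne2 : (starRingEnd ℂ) (w - a) ≠ 0 := (map_ne_zero _).2 hne
  have hsq : (ρ : ℂ) ^ 2 = (w - a) * (starRingEnd ℂ) (w - a) := by
    rw [Complex.mul_conj, Complex.normSq_eq_norm_sq, hw]; push_cast; rfl
  simp only [Function.comp_apply, ContinuousLinearEquiv.coe_coe, Complex.conjCLE_apply, map_div₀, map_neg, map_sub,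
    map_mul, map_pow, Complex.conj_ofReal, Complex.conj_conj]
  simp only [map_sub] at hsq hne2
  rw [hsq, ← sub_mul, show w - a - (z - a) = -(z - w) by ring, neg_mul, neg_div_neg_eq]
  rw [eq_comm, div_mul_cancel_right₀ hne2]

theorem cauchy_ball (z a : ℂ) (r : ℝ) (h : dist z a < r) :
    ∫ w in ball a r, (z - w)⁻¹ = Real.pi * (starRingEnd ℂ) (z - a) := by
  rw [polar_ball _ a r (inv_sub_integrableOn z _ isBounded_ball)]
  have : ∫ ρ in Set.Ioo 0 r, ((ρ * (2 * Real.pi) : ℝ) : ℂ) *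
        Real.circleAverage (fun w => (z - w)⁻¹) a ρ
      = ∫ ρ in Set.Ioo 0 r, (Set.Ioo 0 (dist z a)).indicator
        (fun ρ => ((ρ * (2 * Real.pi) : ℝ) : ℂ) * (z - a)⁻¹) ρ := by
    apply integral_congr_ae
    have hne : ∀ᵐ ρ : ℝ ∂(volume.restrict (Set.Ioo 0 r)), ρ ≠ dist z a :=
      ae_restrict_of_ae (by simp [ae_iff])
    filter_upwards [hne, ae_restrict_mem measurableSet_Ioo] with ρ h1 h2
    by_cases h3 : ρ < dist z a
    · rw [circleAverage_inv_in z a ρ h2.1 h3, Set.indicator_of_mem (show ρ ∈ Set.Ioo 0 (dist z a) from ⟨h2.1, h3⟩)]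
    · rw [circleAverage_inv_out z a ρ h2.1 (lt_of_le_of_ne (not_lt.1 h3) h1.symm),
        Set.indicator_of_notMem (fun hh => h3 hh.2), mul_zero]
  rw [this, setIntegral_indicator measurableSet_Ioo]
  have e : Set.Ioo 0 r ∩ Set.Ioo 0 (dist z a) = Set.Ioo 0 (dist z a) :=
    Set.inter_eq_right.2 (Set.Ioo_subset_Ioo_right h.le)
  rw [e, integral_rho _ dist_nonneg]
  by_cases hz : z - a = 0
  · simp [hz]
  · have : ((dist z a : ℝ) : ℂ) ^ 2 = (z - a) * (starRingEnd ℂ) (z - a) := by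
      rw [Complex.mul_conj, Complex.normSq_eq_norm_sq, dist_eq_norm]; push_cast; rfl
    rw [this]
    field_simp

theorem holo_key (Ω : Set ℂ) (ho : IsOpen Ω) (hb : Bornology.IsBounded Ω) (g : ℂ → ℂ)
    (hg : DifferentiableOn ℂ g Ω) (hgi : IntegrableOn g Ω) :
    DifferentiableOn ℂ (fun z => (starRingEnd ℂ) z * g z -
      (Real.pi : ℂ)⁻¹ * ∫ w in Ω, (z - w)⁻¹ * g w) Ω := by
  intro p hp
  obtain ⟨r, hr, hrΩ⟩ := Metric.nhds_basis_closedBall.mem_iff.1 (ho.mem_nhds hp)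
  have hbΩ : ball p r ⊆ Ω := ball_subset_closedBall.trans hrΩ
  have hpi : (Real.pi : ℂ) ≠ 0 := by exact_mod_cast Real.pi_ne_zero
  have hmeas : MeasurableSet (Ω \ ball p r) := ho.measurableSet.diff isOpen_ball.measurableSet
  -- the outer integral
  have hJ : DifferentiableAt ℂ (fun z => ∫ w in Ω \ ball p r, (z - w)⁻¹ * g w) p := by
    have hgi' : Integrable g (volume.restrict (Ω \ ball p r)) := hgi.mono_set Set.sdiff_subset
    have hlow : ∀ z ∈ ball p (r/2), ∀ w ∈ Ω \ ball p r, r / 2 ≤ ‖z - w‖ := by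
      intro z hz w hw
      have h1 : r ≤ dist w p := by simpa using hw.2
      have h2 : dist z p < r / 2 := hz
      have h3 := dist_triangle w z p
      rw [← dist_eq_norm, dist_comm z w]
      linarith
    have hmz : ∀ z : ℂ, AEStronglyMeasurable (fun w => (z - w)⁻¹ * g w)
        (volume.restrict (Ω \ ball p r)) := fun z =>
      (Measurable.aestronglyMeasurable (by fun_prop)).mul hgi'.1
    have := hasDerivAt_integral_of_dominated_loc_of_deriv_le
      (μ := volume.restrict (Ω \ ball p r)) (F := fun z w => (z - w)⁻¹ * g w)
      (F' := fun z w => -((z - w) ^ 2)⁻¹ * g w) (x₀ := p) (s := ball p (r/2))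
      (bound := fun w => ((r/2)^2)⁻¹ * ‖g w‖) (ball_mem_nhds p (by positivity))
      (Filter.Eventually.of_forall hmz) ?_ ?_ ?_ ?_ ?_
    · exact this.2.differentiableAt
    · refine (hgi'.norm.const_mul (r/2)⁻¹).mono' (hmz p) ?_
      filter_upwards [ae_restrict_mem hmeas] with w hw
      rw [norm_mul, norm_inv]
      gcongr
      exact hlow p (mem_ball_self (by positivity)) w hw
    · exact (Measurable.aestronglyMeasurable (by fun_prop)).mul hgi'.1
    · filter_upwards [ae_restrict_mem hmeas] with w hw z hz
      rw [norm_mul, norm_neg, norm_inv, norm_pow]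
      gcongr
      exact hlow z hz w hw
    · exact hgi'.norm.const_mul _
    · filter_upwards [ae_restrict_mem hmeas] with w hw z hz
      have hne : z - w ≠ 0 := by
        have := hlow z hz w hw
        rw [← norm_pos_iff]; linarith
      have := (((hasDerivAt_id z).sub_const w).fun_inv hne).mul_const (g w)
      refine HasDerivAt.congr_deriv this ?_
      simp [neg_div, one_div]
  have hds : DifferentiableAt ℂ (dslope g p) p :=
    ((Complex.differentiableOn_dslope (ho.mem_nhds hp)).2 hg).differentiableAt (ho.mem_nhds hp)
  have hgp : DifferentiableAt ℂ g p := hg.differentiableAt (ho.mem_nhds hp)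
  have hE : DifferentiableAt ℂ (fun z => (starRingEnd ℂ) p * g z + r ^ 2 * dslope g p z
      - (Real.pi : ℂ)⁻¹ * ∫ w in Ω \ ball p r, (z - w)⁻¹ * g w) p := by
    fun_prop
  refine (hE.congr_of_eventuallyEq ?_).differentiableWithinAt
  filter_upwards [ball_mem_nhds p hr] with z hz
  have hzΩ : z ∈ Ω := hbΩ hz
  have hgc : ContinuousOn g (closedBall p r) := (hg.mono hrΩ).continuousOn
  have hdz : DifferentiableOn ℂ (dslope g z) Ω :=
    (Complex.differentiableOn_dslope (ho.mem_nhds hzΩ)).2 hg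
  have hdi : IntegrableOn (dslope g z) (ball p r) :=
    ((hdz.mono hrΩ).continuousOn.integrableOn_compact (isCompact_closedBall p r)).mono_set
      ball_subset_closedBall
  have hi0 : IntegrableOn (fun w => (z - w)⁻¹ * g z) (ball p r) :=
    (inv_sub_integrableOn z _ isBounded_ball).mul_const _
  have hae : ∀ᵐ w ∂(volume.restrict (ball p r)),
      (z - w)⁻¹ * g z - dslope g z w = (z - w)⁻¹ * g w := by
    have hne : ∀ᵐ w : ℂ ∂(volume.restrict (ball p r)), w ≠ z :=
      ae_restrict_of_ae (by simp [ae_iff])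
    filter_upwards [hne] with w hw
    rw [dslope_of_ne _ hw, slope_def_field, div_eq_inv_mul,
      show w - z = -(z - w) by ring, inv_neg]
    ring
  have hi1 : IntegrableOn (fun w => (z - w)⁻¹ * g w) (ball p r) :=
    (hi0.sub hdi).congr hae
  have hi2 : IntegrableOn (fun w => (z - w)⁻¹ * g w) (Ω \ ball p r) := by
    have hgi' : Integrable g (volume.restrict (Ω \ ball p r)) := hgi.mono_set Set.sdiff_subset
    have hz' : 0 < r - dist z p := by
      have : dist z p < r := hz
      linarith
    refine (hgi'.norm.const_mul (r - dist z p)⁻¹).mono'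
      ((Measurable.aestronglyMeasurable (by fun_prop)).mul hgi'.1) ?_
    filter_upwards [ae_restrict_mem hmeas] with w hw
    rw [norm_mul, norm_inv]
    gcongr
    have h1 : r ≤ dist w p := by simpa using hw.2
    have h3 := dist_triangle w z p
    rw [← dist_eq_norm, dist_comm z w]
    linarith
  have hsplit : ∫ w in Ω, (z - w)⁻¹ * g w =
      (∫ w in ball p r, (z - w)⁻¹ * g w) + ∫ w in Ω \ ball p r, (z - w)⁻¹ * g w := by
    rw [← setIntegral_union Set.disjoint_sdiff_right hmeas hi1 hi2, Set.union_sdiff_cancel hbΩ]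
  have hin : ∫ w in ball p r, (z - w)⁻¹ * g w =
      Real.pi * (starRingEnd ℂ) (z - p) * g z - Real.pi * r ^ 2 * dslope g p z := by
    rw [← integral_congr_ae hae, integral_sub hi0 hdi, integral_mul_const, cauchy_ball z p r hz,
      mean_ball _ Ω hdz p r hr.le hrΩ]
    congr 2
    by_cases hzp : z = p
    · rw [hzp]
    · rw [dslope_of_ne _ hzp, dslope_of_ne _ (Ne.symm hzp), slope_comm]
  simp only [hsplit, hin, map_sub]
  field_simp
  ring

theorem eval_bound (Ω : Set ℂ) (hb : Bornology.IsBounded Ω) (f : L2C Ω) (g : ℂ → ℂ)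
    (hg : DifferentiableOn ℂ g Ω) (hfg : ∀ᵐ z ∂(volume.restrict Ω), f z = g z)
    (z : ℂ) (r : ℝ) (hr : 0 ≤ r) (hz : closedBall z r ⊆ Ω) :
    Real.pi * r ^ 2 * ‖g z‖ ≤ ((volume.restrict Ω).real Set.univ) ^ (1 / 2 : ℝ) * ‖f‖ := by
  have hfin : IsFiniteMeasure (volume.restrict Ω) := ⟨by simpa using hb.measure_lt_top⟩
  have h1 := L2.inner_indicatorConstLp_one (𝕜 := ℂ) (isOpen_ball (x := z) (ε := r)).measurableSet
    (measure_ne_top (volume.restrict Ω) _) f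
  have hbz : ball z r ⊆ Ω := ball_subset_closedBall.trans hz
  have h2 : ∫ w in ball z r, f w ∂(volume.restrict Ω) = Real.pi * r ^ 2 * g z := by
    rw [← mean_ball g Ω hg z r hr hz]
    rw [integral_congr_ae (ae_restrict_of_ae hfg),
      Measure.restrict_restrict isOpen_ball.measurableSet, Set.inter_eq_left.2 hbz]
  rw [h2] at h1
  have h3 : ‖(Real.pi * r ^ 2 * g z : ℂ)‖ = Real.pi * r ^ 2 * ‖g z‖ := by
    simp [abs_of_pos Real.pi_pos]
  rw [← h3, ← h1]
  refine (norm_inner_le_norm _ _).trans ?_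
  gcongr
  rw [norm_indicatorConstLp (by norm_num) (by norm_num)]
  simp only [norm_one, one_mul, ENNReal.toReal_ofNat]
  gcongr
  · exact measure_ne_top _ _
  · exact Set.subset_univ _

theorem A2C_closed (Ω : Set ℂ) (ho : IsOpen Ω) (hb : Bornology.IsBounded Ω) :
    IsClosed (A2C Ω : Set (L2C Ω)) := by
  apply IsSeqClosed.isClosed
  intro F f hF hlim
  choose g hg hFg using hF
  set M := ((volume.restrict Ω).real Set.univ) ^ (1 / 2 : ℝ) with hM
  have hM0 : 0 ≤ M := by positivity
  have hUC : ∀ p ∈ Ω, ∃ r > 0, UniformCauchySeqOn g Filter.atTop (ball p r) := by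
    intro p hp
    obtain ⟨R, hR, hRΩ⟩ := Metric.nhds_basis_closedBall.mem_iff.1 (ho.mem_nhds hp)
    have hr : 0 < R / 2 := by positivity
    refine ⟨R / 2, hr, ?_⟩
    rw [Metric.uniformCauchySeqOn_iff]
    intro ε hε
    have hc : 0 < Real.pi * (R / 2) ^ 2 := by have := Real.pi_pos; positivity
    obtain ⟨N, hN⟩ := Metric.cauchySeq_iff.1 hlim.cauchySeq
      (Real.pi * (R / 2) ^ 2 * ε / (M + 1)) (by positivity)
    refine ⟨N, fun m hm n hn z hz => ?_⟩
    have hzΩ : closedBall z (R / 2) ⊆ Ω := by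
      refine (closedBall_subset_closedBall' ?_).trans hRΩ
      have : dist z p < R / 2 := hz
      linarith
    have hae : ∀ᵐ w ∂(volume.restrict Ω), (F m - F n) w = (g m - g n) w := by
      filter_upwards [hFg m, hFg n, Lp.coeFn_sub (F m) (F n)] with w a b c
      rw [c, Pi.sub_apply, a, b, Pi.sub_apply]
    have h1 := eval_bound Ω hb (F m - F n) (g m - g n) ((hg m).sub (hg n)) hae z (R / 2) hr.le hzΩ
    have h2 := hN m hm n hn
    rw [dist_eq_norm] at h2 ⊢
    rw [← hM, Pi.sub_apply] at h1
    have h3 : M * ‖F m - F n‖ < Real.pi * (R / 2) ^ 2 * ε := by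
      rw [lt_div_iff₀ (by positivity)] at h2
      have : M * ‖F m - F n‖ ≤ ‖F m - F n‖ * (M + 1) := by
        nlinarith [norm_nonneg (F m - F n)]
      linarith
    exact lt_of_mul_lt_mul_left (h1.trans_lt h3) hc.le
  have hpt : ∀ z, ∃ l, z ∈ Ω → Filter.Tendsto (fun n => g n z) Filter.atTop (nhds l) := by
    intro z
    by_cases hz : z ∈ Ω
    · obtain ⟨r, hr, h⟩ := hUC z hz
      obtain ⟨l, hl⟩ := cauchySeq_tendsto_of_complete (h.cauchySeq (mem_ball_self hr))
      exact ⟨l, fun _ => hl⟩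
    · exact ⟨0, fun h => absurd h hz⟩
  choose G hG using hpt
  have hloc : TendstoLocallyUniformlyOn g G Filter.atTop Ω := by
    intro u hu x hx
    obtain ⟨r, hr, h⟩ := hUC x hx
    refine ⟨ball x r ∩ Ω, Filter.inter_mem (mem_nhdsWithin_of_mem_nhds (ball_mem_nhds x hr))
      self_mem_nhdsWithin, ?_⟩
    have := (h.mono (Set.inter_subset_left (t := Ω))).tendstoUniformlyOn_of_tendsto
      (f := G) (fun z hz => hG z hz.2)
    exact this u hu
  refine ⟨G, hloc.differentiableOn (Filter.Eventually.of_forall hg) ho, ?_⟩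
  obtain ⟨ns, hns, hae⟩ := (tendstoInMeasure_of_tendsto_Lp hlim).exists_seq_tendsto_ae
  filter_upwards [hae, ae_all_iff.2 hFg, ae_restrict_mem ho.measurableSet] with z h1 h2 h3
  simp only [h2] at h1
  exact tendsto_nhds_unique h1 ((hG z h3).comp hns.tendsto_atTop)

/-- extension by zero of a continuous function on the closure -/
def extK (Ω : Set ℂ) (φ : C(closure Ω, ℂ)) : ℂ → ℂ := Function.extend Subtype.val φ 0

theorem extK_apply (Ω : Set ℂ) (φ : C(closure Ω, ℂ)) (z : ℂ) (hz : z ∈ closure Ω) :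
    extK Ω φ z = φ ⟨z, hz⟩ :=
  Function.Injective.extend_apply Subtype.val_injective φ 0 ⟨z, hz⟩

theorem extK_ae (Ω : Set ℂ) (ho : IsOpen Ω) : ∀ᵐ z ∂(volume.restrict Ω), z ∈ closure Ω := by
  filter_upwards [ae_restrict_mem ho.measurableSet] with z hz
  exact subset_closure hz

theorem exists_Mop (Ω : Set ℂ) (ho : IsOpen Ω) [CompactSpace (closure Ω)] :
    ∃ M : C(closure Ω, ℂ) →L[ℂ] (L2C Ω →L[ℂ] L2C Ω), ∀ φ f,
      ∀ᵐ z ∂(volume.restrict Ω), M φ f z = extK Ω φ z * f z := by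
  have hm : ∀ φ : C(closure Ω, ℂ), Measurable (extK Ω φ) := fun φ =>
    (MeasurableEmbedding.subtype_coe isClosed_closure.measurableSet).measurable_extend
      φ.continuous.measurable measurable_const
  have hbd : ∀ (φ : C(closure Ω, ℂ)) (f : L2C Ω), ∀ᵐ z ∂(volume.restrict Ω),
      ‖extK Ω φ z * f z‖ ≤ ‖φ‖ * ‖f z‖ := fun φ f => by
    filter_upwards [extK_ae Ω ho] with z hz
    rw [norm_mul, extK_apply Ω φ z hz]
    gcongr
    exact φ.norm_coe_le_norm _
  have hL : ∀ (φ : C(closure Ω, ℂ)) (f : L2C Ω),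
      MemLp (fun z => extK Ω φ z * f z) 2 (volume.restrict Ω) := fun φ f =>
    (Lp.memLp f).of_le_mul ((hm φ).aestronglyMeasurable.mul (Lp.aestronglyMeasurable f)) (hbd φ f)
  let B : C(closure Ω, ℂ) →ₗ[ℂ] L2C Ω →ₗ[ℂ] L2C Ω := LinearMap.mk₂ ℂ (fun φ f => (hL φ f).toLp _)
    (fun φ ψ f => by
      apply Lp.ext
      filter_upwards [(hL (φ + ψ) f).coeFn_toLp, (hL φ f).coeFn_toLp, (hL ψ f).coeFn_toLp,
        Lp.coeFn_add ((hL φ f).toLp _) ((hL ψ f).toLp _), extK_ae Ω ho] with z a b c d e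
      rw [a, d, Pi.add_apply, b, c]
      simp only [extK_apply Ω _ z e, ContinuousMap.add_apply, add_mul])
    (fun c φ f => by
      apply Lp.ext
      filter_upwards [(hL (c • φ) f).coeFn_toLp, (hL φ f).coeFn_toLp,
        Lp.coeFn_smul c ((hL φ f).toLp _), extK_ae Ω ho] with z a b d e
      rw [a, d, Pi.smul_apply, b]
      simp only [extK_apply Ω _ z e, ContinuousMap.smul_apply, smul_eq_mul, mul_assoc])
    (fun φ f g => by
      apply Lp.ext
      filter_upwards [(hL φ (f + g)).coeFn_toLp, (hL φ f).coeFn_toLp, (hL φ g).coeFn_toLp,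
        Lp.coeFn_add ((hL φ f).toLp _) ((hL φ g).toLp _), Lp.coeFn_add f g] with z a b c d e
      rw [a, d, Pi.add_apply, b, c, e, Pi.add_apply, mul_add])
    (fun c φ f => by
      apply Lp.ext
      filter_upwards [(hL φ (c • f)).coeFn_toLp, (hL φ f).coeFn_toLp,
        Lp.coeFn_smul c ((hL φ f).toLp _), Lp.coeFn_smul c f] with z a b d e
      rw [a, d, Pi.smul_apply, b, e, Pi.smul_apply, smul_eq_mul, smul_eq_mul, mul_left_comm])
  refine ⟨B.mkContinuous₂ 1 fun φ f => ?_, fun φ f => (hL φ f).coeFn_toLp⟩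
  change ‖(hL φ f).toLp _‖ ≤ _
  rw [one_mul]
  apply Lp.norm_le_mul_norm_of_ae_le_mul
  filter_upwards [(hL φ f).coeFn_toLp, hbd φ f] with z a b
  rw [a]; exact b

theorem exists_cauchy (Ω : Set ℂ) (ho : IsOpen Ω) (hb : Bornology.IsBounded Ω) :
    ∃ T : L2C Ω →L[ℂ] L2C Ω, IsCompactOperator T ∧ ∀ f : L2C Ω,
      ∀ᵐ z ∂(volume.restrict Ω), T f z = ∫ w in Ω, (z - w)⁻¹ * f w := by
  obtain ⟨R, hR⟩ := hb.subset_ball 0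
  have hki := (integrable_indicator_iff isOpen_ball.measurableSet).2 (inv_integrableOn (2 * R))
  obtain ⟨T, hT, hTf⟩ := conv_op Ω ho hb ((ball 0 (2 * R)).indicator fun w => w⁻¹)
    (measurable_inv.indicator isOpen_ball.measurableSet) hki
  refine ⟨T, hT, fun f => ?_⟩
  filter_upwards [hTf f, ae_restrict_mem ho.measurableSet] with z h1 hz
  rw [h1]
  refine setIntegral_congr_fun ho.measurableSet fun w hw => ?_
  have : z - w ∈ ball (0 : ℂ) (2 * R) := by
    have a := hR hz
    have b := hR hw
    rw [mem_ball, dist_zero_right] at a b ⊢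
    have := norm_sub_le z w
    linarith
  simp only [Set.indicator_of_mem this]

theorem stmt2 (Ω : Set ℂ) (hΩopen : IsOpen Ω) (hΩbdd : Bornology.IsBounded Ω)
    (hΩconn : IsConnected Ω) (φ : ℂ → ℂ) (hφ : ContinuousOn φ (closure Ω)) :
    ∃ H : A2C Ω →L[ℂ] L2C Ω, IsHankelC Ω φ H ∧ IsCompactOperator H := by
  have hfin : IsFiniteMeasure (volume.restrict Ω) := ⟨by simpa using hΩbdd.measure_lt_top⟩
  haveI : CompactSpace (closure Ω) := isCompact_iff_compactSpace.1 hΩbdd.isCompact_closure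
  haveI : CompleteSpace (A2C Ω) := (A2C_closed Ω hΩopen hΩbdd).completeSpace_coe
  obtain ⟨M, hM⟩ := exists_Mop Ω hΩopen
  obtain ⟨T, hTc, hT⟩ := exists_cauchy Ω hΩopen hΩbdd
  set Q : L2C Ω →L[ℂ] L2C Ω := ContinuousLinearMap.id ℂ _ - (A2C Ω).starProjection with hQ
  have hQ0 : ∀ x ∈ A2C Ω, Q x = 0 := fun x hx => by
    rw [hQ, _root_.sub_apply, ContinuousLinearMap.id_apply,
      Submodule.starProjection_eq_self_iff.2 hx, sub_self]
  have hQperp : ∀ x, Q x ∈ (A2C Ω)ᗮ := fun x => by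
    rw [hQ, _root_.sub_apply, ContinuousLinearMap.id_apply]
    exact Submodule.sub_starProjection_mem_orthogonal x
  set ι : A2C Ω →L[ℂ] L2C Ω := (A2C Ω).subtypeL with hι
  let Hk : C(closure Ω, ℂ) → (A2C Ω →L[ℂ] L2C Ω) := fun ψ => Q ∘L (M ψ) ∘L ι
  have hzero : ∀ ψ : C(closure Ω, ℂ), (∀ f ∈ A2C Ω, M ψ f ∈ A2C Ω) →
      IsCompactOperator (Hk ψ) := fun ψ h => by
    have : Hk ψ = 0 := by
      ext1 f
      exact hQ0 _ (h f f.2)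
    rw [this]
    exact isCompactOperator_zero
  have main : ∀ ψ : C(closure Ω, ℂ), IsCompactOperator (Hk ψ) := by
    intro ψ
    induction ψ using ContinuousMap.induction_on_of_compact with
    | const r =>
      apply hzero
      rintro f ⟨g, hg, hfg⟩
      refine ⟨fun z => r * g z, hg.const_mul r, ?_⟩
      filter_upwards [hM (.const _ r) f, hfg, extK_ae Ω hΩopen] with z a b c
      rw [a, b, extK_apply Ω _ z c]; rfl
    | id =>
      apply hzero
      rintro f ⟨g, hg, hfg⟩
      refine ⟨fun z => z * g z, differentiableOn_id.mul hg, ?_⟩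
      filter_upwards [hM (.restrict _ (.id ℂ)) f, hfg, extK_ae Ω hΩopen] with z a b c
      rw [a, b, extK_apply Ω _ z c]; rfl
    | star_id =>
      have : Hk (star (.restrict _ (.id ℂ))) = (Q ∘L ((Real.pi : ℂ)⁻¹ • T)) ∘L ι := by
        ext1 f
        change Q (M _ (f : L2C Ω)) = Q (((Real.pi : ℂ)⁻¹ • T) (f : L2C Ω))
        rw [← sub_eq_zero, ← map_sub]
        apply hQ0
        obtain ⟨g, hg, hfg⟩ := f.2
        have hgi : IntegrableOn g Ω :=
          ((Lp.memLp (f : L2C Ω)).integrable one_le_two).congr hfg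
        refine ⟨_, holo_key Ω hΩopen hΩbdd g hg hgi, ?_⟩
        filter_upwards [hM (star (.restrict _ (.id ℂ))) f, hfg, extK_ae Ω hΩopen, hT f,
          Lp.coeFn_sub (M (star (.restrict _ (.id ℂ))) (f : L2C Ω))
            (((Real.pi : ℂ)⁻¹ • T) (f : L2C Ω)),
          Lp.coeFn_smul (Real.pi : ℂ)⁻¹ (T (f : L2C Ω))] with z a b c d e e'
        rw [e, Pi.sub_apply, a, b, extK_apply Ω _ z c, _root_.smul_apply, e', Pi.smul_apply, d,
          smul_eq_mul]
        congr 2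
        apply integral_congr_ae
        filter_upwards [hfg] with w hw
        rw [hw]
      rw [this]
      exact ((hTc.smul (Real.pi : ℂ)⁻¹).clm_comp Q).comp_clm ι
    | add ψ χ h1 h2 =>
      have : Hk (ψ + χ) = Hk ψ + Hk χ := by
        ext1 f
        simp [Hk, map_add]
      rw [this]
      exact h1.add h2
    | mul ψ χ h1 h2 =>
      have hmul : ∀ f, M (ψ * χ) f = M ψ (M χ f) := fun f => by
        apply Lp.ext
        filter_upwards [hM (ψ * χ) f, hM ψ (M χ f), hM χ f, extK_ae Ω hΩopen] with z a b c d
        rw [a, b, c]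
        simp only [extK_apply Ω _ z d, ContinuousMap.mul_apply, mul_assoc]
      have : Hk (ψ * χ) = (Hk ψ) ∘L ((A2C Ω).orthogonalProjection ∘L (M χ) ∘L ι)
          + (Q ∘L M ψ) ∘L (Hk χ) := by
        ext1 f
        change Q (M (ψ * χ) f) = Q (M ψ ((A2C Ω).starProjection (M χ f))) + Q (M ψ (Q (M χ f)))
        rw [hmul, ← map_add, ← map_add]
        congr 2
        simp [hQ]
      rw [this]
      have h3 : IsCompactOperator ((Q ∘L M ψ) ∘L (Hk χ)) := h2.clm_comp (Q ∘L M ψ)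
      have h4 : IsCompactOperator
          ((Hk ψ) ∘L ((A2C Ω).orthogonalProjection ∘L (M χ) ∘L ι)) :=
        h1.comp_clm ((A2C Ω).orthogonalProjection ∘L (M χ) ∘L ι)
      exact h4.add h3
    | frequently ψ h =>
      have hcont : Continuous Hk := by
        change Continuous fun ψ => Q ∘L (M ψ) ∘L ι
        fun_prop
      have hcl := (isClosed_setOfPred_isCompactOperator (σ₁₂ := RingHom.id ℂ) (M₁ := A2C Ω)
        (M₂ := L2C Ω)).preimage hcont
      exact isClosed_iff_frequently.1 hcl ψ h
  set φ' : C(closure Ω, ℂ) := ⟨(closure Ω).restrict φ, hφ.restrict⟩ with hφ'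
  refine ⟨Hk φ', ⟨fun f g hg => ?_, fun f => ?_⟩, main φ'⟩
  · exact (Submodule.mem_orthogonal' _ _).1 (hQperp _) g hg
  · obtain ⟨g, hg, hfg⟩ := (A2C Ω).starProjection_apply_mem (M φ' f)
    refine ⟨g, hg, ?_⟩
    have e : Hk φ' f = M φ' f - (A2C Ω).starProjection (M φ' f) := rfl
    filter_upwards [hfg, hM φ' f, extK_ae Ω hΩopen,
      Lp.coeFn_sub (M φ' f) ((A2C Ω).starProjection (M φ' f))] with z a b c d
    rw [e, d, Pi.sub_apply, b, a, extK_apply Ω _ z c]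
    exact sub_sub_cancel _ _
end
end

section
/- Let X and Y be complex Hilbert spaces and let T : X → Y be a bounded linear operator. Then T is compact if and only if for every ε > 0 there exists a compact bounded linear operator K_ε : X → Y such that ‖T h‖_Y ≤ ε ‖h‖_X + ‖K_ε h‖_Y for all h ∈ X. -/
theorem stmt3 {X Y : Type*} [NormedAddCommGroup X] [InnerProductSpace ℂ X] [CompleteSpace X]
    [NormedAddCommGroup Y] [InnerProductSpace ℂ Y] [CompleteSpace Y] (T : X →L[ℂ] Y) :
    IsCompactOperator T ↔
      ∀ ε : ℝ, 0 < ε → ∃ K : X →L[ℂ] Y, IsCompactOperator K ∧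
        ∀ h : X, ‖T h‖ ≤ ε * ‖h‖ + ‖K h‖ := by
  constructor
  · intro hT ε hε
    exact ⟨T, hT, fun h => le_add_of_nonneg_left (by positivity)⟩
  · intro H
    have key : TotallyBounded (T '' Metric.closedBall (0 : X) 1) := by
      rw [Metric.totallyBounded_iff]
      intro δ hδ
      obtain ⟨K, hK, hTK⟩ := H (δ / 8) (by positivity)
      have hKc : IsCompact (closure (K '' Metric.closedBall (0 : X) 1)) :=
        IsCompactOperator.isCompact_closure_image_closedBall (f := (K : X →ₗ[ℂ] Y)) hK 1
      have hKt : TotallyBounded (K '' Metric.closedBall (0 : X) 1) :=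
        hKc.totallyBounded.subset subset_closure
      obtain ⟨u, hus, huf, hcov⟩ := Set.exists_subset_image_finite_and.1
        (Metric.finite_approx_of_totallyBounded hKt (δ / 2) (by positivity))
      refine ⟨T '' u, huf.image _, ?_⟩
      rintro _ ⟨x, hx, rfl⟩
      have hx' := hcov (Set.mem_image_of_mem K hx)
      simp only [Set.mem_iUnion, Set.mem_image, exists_prop, Metric.mem_ball] at hx' ⊢
      obtain ⟨_, ⟨y, hy, rfl⟩, hxy⟩ := hx'
      refine ⟨T y, ⟨y, hy, rfl⟩, ?_⟩
      have h1 := hTK (x - y)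
      rw [map_sub, map_sub, ← dist_eq_norm, ← dist_eq_norm (K x)] at h1
      have hx1 : ‖x‖ ≤ 1 := by simpa using hx
      have hy1 : ‖y‖ ≤ 1 := by simpa using hus hy
      have h2 : ‖x - y‖ ≤ 2 := (norm_sub_le x y).trans (by linarith)
      nlinarith
    have hc : IsCompact (closure (T '' Metric.closedBall (0 : X) 1)) :=
      isCompact_iff_totallyBounded_isComplete.2 ⟨key.closure, isClosed_closure.isComplete⟩
    exact (isCompactOperator_iff_isCompact_closure_image_closedBall
      (T : X →ₗ[ℂ] Y) one_pos).2 hc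
end

section
/- Let n ≥ 1, p ∈ ℂⁿ, r > 0, and ε > 0. Then there exist δ with 0 < δ < r and a smooth function ψ : ℂⁿ → ℝ such that: (i) −1 ≤ ψ(z) ≤ 0 for all z ∈ B(p,r); (ii) the complex Hessian of ψ is nonnegative everywhere, i.e., H_ψ(z)(w) ≥ 0 for all z, w ∈ ℂⁿ; and (iii) H_ψ(z)(w) ≥ (1/ε) |w|² for all w ∈ ℂⁿ and all z with r − δ ≤ |z − p| ≤ r. -/
open Metric

noncomputable section

abbrev Cn (n : ℕ) := EuclideanSpace ℂ (Fin n)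

/-- The complex Hessian of `ψ : ℂⁿ → ℝ` at `z` in direction `w`:
`H_ψ(z)(w) = Σ_{j,k} (∂²ψ/∂z_j∂z̄_k)(z) w_j w̄_k = ¼(D²ψ(z)[w,w] + D²ψ(z)[iw,iw])`. -/
def complexHessian (n : ℕ) (ψ : Cn n → ℝ) (z w : Cn n) : ℝ :=
  (1 / 4 : ℝ) * (fderiv ℝ (fderiv ℝ ψ) z w w +
    fderiv ℝ (fderiv ℝ ψ) z (Complex.I • w) (Complex.I • w))

lemma aux_first {E : Type*} [NormedAddCommGroup E] [InnerProductSpace ℝ E] (p : E) (A r : ℝ)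
    (z : E) :
    HasFDerivAt (fun z : E => Real.exp (A * (‖z - p‖ ^ 2 - r ^ 2)) - 1)
      ((Real.exp (A * (‖z - p‖ ^ 2 - r ^ 2)) * (2 * A)) • innerSL ℝ (z - p)) z := by
  have h1 : HasFDerivAt (fun z : E => ‖z - p‖ ^ 2) (2 • (innerSL ℝ (z - p))) z := by
    simpa using ((hasFDerivAt_id z).sub_const p).norm_sq
  have h2 := (((h1.sub_const (r ^ 2)).const_mul A).exp).sub_const 1
  have e : Real.exp (A * (‖z - p‖ ^ 2 - r ^ 2)) • A • 2 • (innerSL ℝ) (z - p) =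
      (Real.exp (A * (‖z - p‖ ^ 2 - r ^ 2)) * (2 * A)) • (innerSL ℝ) (z - p) := by
    ext w
    simp
    ring
  exact e ▸ h2

lemma aux_second {E : Type*} [NormedAddCommGroup E] [InnerProductSpace ℝ E] (p : E) (A r : ℝ)
    (z w : E) :
    fderiv ℝ (fderiv ℝ (fun z : E => Real.exp (A * (‖z - p‖ ^ 2 - r ^ 2)) - 1)) z w w =
      Real.exp (A * (‖z - p‖ ^ 2 - r ^ 2)) *
        ((2 * A * inner ℝ (z - p) w) ^ 2 + 2 * A * ‖w‖ ^ 2) := by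
  have h0 : fderiv ℝ (fun z : E => Real.exp (A * (‖z - p‖ ^ 2 - r ^ 2)) - 1) =
      fun z => (Real.exp (A * (‖z - p‖ ^ 2 - r ^ 2)) * (2 * A)) • innerSL ℝ (z - p) :=
    funext fun z => (aux_first p A r z).fderiv
  rw [h0]
  have h1 := ((aux_first p A r z).add_const 1).mul_const (2 * A)
  simp only [sub_add_cancel] at h1
  have h2 : HasFDerivAt (fun z : E => innerSL ℝ (z - p)) (innerSL ℝ : E →L[ℝ] E →L[ℝ] ℝ) z := by
    have := (innerSL ℝ : E →L[ℝ] E →L[ℝ] ℝ).hasFDerivAt.comp z ((hasFDerivAt_id z).sub_const p)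
    simpa [Function.comp_def] using this
  have h3 := (h1.smul h2).fderiv
  simp only [Pi.smul_def'] at h3
  rw [h3]
  have h4 : ((innerSL ℝ : E →L[ℝ] E →L[ℝ] ℝ) w) w = ‖w‖ ^ 2 := real_inner_self_eq_norm_sq w
  simp [inner_sub_left]
  rw [show ((innerSL ℝ) w) w = ‖w‖ ^ 2 from h4]
  ring

theorem stmt12 (n : ℕ) (hn : 1 ≤ n) (p : Cn n) (r : ℝ) (hr : 0 < r) (ε : ℝ) (hε : 0 < ε) :
    ∃ δ : ℝ, 0 < δ ∧ δ < r ∧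
      ∃ ψ : Cn n → ℝ, ContDiff ℝ (⊤ : ℕ∞) ψ ∧
        (∀ z ∈ ball p r, -1 ≤ ψ z ∧ ψ z ≤ 0) ∧
        (∀ z w : Cn n, 0 ≤ complexHessian n ψ z w) ∧
        (∀ z w : Cn n, r - δ ≤ ‖z - p‖ → ‖z - p‖ ≤ r →
          (1 / ε) * ‖w‖ ^ 2 ≤ complexHessian n ψ z w) := by
  obtain ⟨A, hA⟩ : ∃ A : ℝ, A = Real.exp 1 / ε := ⟨_, rfl⟩
  have hA0 : 0 < A := by rw [hA]; positivity
  have key : ∀ z w : Cn n, Real.exp (A * (‖z - p‖ ^ 2 - r ^ 2)) * (A * ‖w‖ ^ 2) ≤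
      complexHessian n (fun z => Real.exp (A * (‖z - p‖ ^ 2 - r ^ 2)) - 1) z w := by
    intro z w
    unfold complexHessian
    have e1 := aux_second p A r z w
    have e2 := aux_second p A r z (Complex.I • w)
    have hI : ‖Complex.I • w‖ = ‖w‖ := by rw [norm_smul]; simp
    rw [hI] at e2
    erw [e1, e2]
    have := Real.exp_pos (A * (‖z - p‖ ^ 2 - r ^ 2))
    nlinarith [mul_nonneg this.le (sq_nonneg (2 * A * inner ℝ (z - p) w)),
      mul_nonneg this.le (sq_nonneg (2 * A * inner ℝ (z - p) (Complex.I • w)))]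
  refine ⟨min (r / 2) (1 / (2 * r * A)), by positivity, by
    have := min_le_left (r / 2) (1 / (2 * r * A)); linarith,
    fun z => Real.exp (A * (‖z - p‖ ^ 2 - r ^ 2)) - 1, ?_, ?_, ?_, ?_⟩
  · have : ContDiff ℝ (⊤ : ℕ∞) (fun z : Cn n => ‖z - p‖ ^ 2) :=
      (contDiff_id.sub contDiff_const).norm_sq ℝ
    fun_prop
  · intro z hz
    rw [mem_ball, dist_eq_norm] at hz
    refine ⟨by linarith [Real.exp_pos (A * (‖z - p‖ ^ 2 - r ^ 2))], ?_⟩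
    have : Real.exp (A * (‖z - p‖ ^ 2 - r ^ 2)) ≤ 1 := by
      rw [Real.exp_le_one_iff]
      have : ‖z - p‖ ^ 2 ≤ r ^ 2 := by gcongr
      nlinarith
    linarith
  · intro z w
    exact le_trans (by positivity) (key z w)
  · intro z w h1 _
    refine le_trans ?_ (key z w)
    set δ := min (r / 2) (1 / (2 * r * A))
    have hd1 : δ ≤ r / 2 := min_le_left _ _
    have hd2 : δ ≤ 1 / (2 * r * A) := min_le_right _ _
    rw [le_div_iff₀ (by positivity)] at hd2
    have h3 : (r - δ) ^ 2 ≤ ‖z - p‖ ^ 2 := by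
      have : 0 ≤ r - δ := by linarith
      gcongr
    have h4 : -1 ≤ A * (‖z - p‖ ^ 2 - r ^ 2) := by
      have : A * (-(2 * r * δ)) ≤ A * (‖z - p‖ ^ 2 - r ^ 2) := by
        apply mul_le_mul_of_nonneg_left _ hA0.le
        nlinarith [sq_nonneg δ]
      linarith
    have h5 := Real.exp_le_exp.mpr h4
    calc (1 / ε) * ‖w‖ ^ 2 = Real.exp (-1) * (A * ‖w‖ ^ 2) := by
          rw [hA, Real.exp_neg]; field_simp
      _ ≤ _ := by gcongr
end
end
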